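/- Let β ∈ ℂ with Re(β) > 0. Then 2 Σ_{n=1}^∞ K_0(nβ) = π·( 1/β + 2 Σ_{n=1}^∞ ( 1/√(β² + 4π²n²) − 1/(2nπ) ) ) + γ + log(β/2) − log(2π). -/

import Mathlib

open scoped Real

noncomputable def besselK (ν z : ℂ) : ℂ :=
  ∫ t in Set.Ioi (0:ℝ), Complex.exp (-z * Real.cosh t) * Complex.cosh (ν * t)

/-- Principal branch complex square root. -/
noncomputable def csqrt (z : ℂ) : ℂ := z ^ ((1 : ℂ)/2)

/-!
Summing `K₀(n β) = ∫ exp (-n β cosh t) dt` over `n` under the integral sign gives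
`∫ 1 / (exp (β cosh t) - 1) dt`. By the partial fraction expansion of the cotangent,
`1 / (exp w - 1) = 1 / w - 1 / 2 + ∑ 2 w / (w ^ 2 + (2 π n) ^ 2)`, and with `w = β cosh t` each term
integrates over `t` to `π / √(β ^ 2 + (2 π n) ^ 2)`. The constant `-1 / 2` is not integrable, so it
is written as minus the limit of `(2 π)⁻¹ ∫ 2 w / (w ^ 2 + y ^ 2) dy` over `0 ≤ y ≤ 2 π N`: the
partial sums minus these integrals are `O(1 / |w|)` uniformly in `N`, and dominated convergence
applies. The subtracted integrals contribute `log (2 π N + √(β ^ 2 + (2 π N) ^ 2)) - log β`, whose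
growth against the harmonic numbers leaves the Euler–Mascheroni constant.
-/

section

open Complex Filter MeasureTheory Set Topology

variable {K : ℝ} {w β : ℂ}

/-! ### Principal square roots -/

lemma csqrt_eq_sqrt : csqrt = Complex.sqrt := by
  ext z
  rw [csqrt, Complex.sqrt, one_div]

lemma sq_csqrt (z : ℂ) : csqrt z ^ 2 = z := by
  rw [csqrt, one_div]
  exact cpow_ofNat_inv_pow z 2

lemma csqrt_sq (hw : 0 < w.re) : csqrt (w ^ 2) = w := by
  rw [csqrt, one_div, sq_cpow_two_inv hw]

lemma csqrt_re_pos {z : ℂ} (hz : z ∈ slitPlane) : 0 < (csqrt z).re := by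
  rw [csqrt, one_div, cpow_inv_two_re]
  refine Real.sqrt_pos.2 (half_pos ?_)
  rcases mem_slitPlane_iff.1 hz with hre | him
  · positivity
  · linarith [neg_lt_of_abs_lt (abs_re_lt_norm.2 him)]

lemma hasDerivAt_csqrt {z : ℂ} (hz : z ∈ slitPlane) :
    HasDerivAt csqrt (1 / (2 * csqrt z)) z := by
  refine (csqrt_eq_sqrt ▸ hasDerivAt_sqrt hz).congr_deriv ?_
  rw [neg_div, cpow_neg, csqrt]
  ring

lemma sq_add_sq_mem_slitPlane (hw : 0 < w.re) (y : ℝ) :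
    w ^ 2 + (y : ℂ) ^ 2 ∈ slitPlane := by
  rw [mem_slitPlane_iff]
  by_cases him : w.im = 0
  · left
    simp only [pow_two, add_re, mul_re, him, ofReal_re, ofReal_im, mul_zero, sub_zero]
    exact add_pos_of_pos_of_nonneg (mul_pos hw hw) (mul_self_nonneg y)
  · right
    have : (w ^ 2 + (y : ℂ) ^ 2).im = 2 * (w.re * w.im) := by
      simp only [pow_two, add_im, mul_im, ofReal_re, ofReal_im]
      ring
    rw [this]
    exact mul_ne_zero two_ne_zero (mul_ne_zero hw.ne' him)

lemma csqrt_sq_add_sq_re_pos (hw : 0 < w.re) (y : ℝ) :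
    0 < (csqrt (w ^ 2 + (y : ℂ) ^ 2)).re :=
  csqrt_re_pos (sq_add_sq_mem_slitPlane hw y)

-- Comparing imaginary parts of the squares, the root and `w` have imaginary parts of the same sign.
lemma csqrt_sq_add_sq_div_re_pos (hw : 0 < w.re) (y : ℝ) :
    0 < (csqrt (w ^ 2 + (y : ℂ) ^ 2) / w).re := by
  have hs := csqrt_sq_add_sq_re_pos hw y
  have hsq := congrArg im (sq_csqrt (w ^ 2 + (y : ℂ) ^ 2))
  generalize csqrt (w ^ 2 + (y : ℂ) ^ 2) = s at hs hsq
  simp only [pow_two, mul_im, add_im, ofReal_re, ofReal_im, mul_zero, zero_mul, add_zero] at hsq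
  have him : s.re * (s.im * w.im) = w.re * w.im ^ 2 := by linear_combination w.im * hsq / 2
  have him_nonneg : 0 ≤ s.im * w.im :=
    nonneg_of_mul_nonneg_right (him ▸ by positivity) hs
  have hnorm : 0 < normSq w := normSq_pos.2 (ne_zero_of_re_pos hw)
  rw [div_re]
  positivity

/-! ### The symmetrised Cauchy kernel -/

/-- The symmetric sector `{w | 0 < w.re, ‖w‖ ≤ K * w.re}` of the open right half-plane, on which
the estimates below are uniform. -/
def rightSector (K : ℝ) : Set ℂ := {w | 0 < w.re ∧ ‖w‖ ≤ K * w.re}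

lemma exists_mem_rightSector (hw : 0 < w.re) : ∃ K, w ∈ rightSector K :=
  ⟨‖w‖ / w.re, hw, (div_mul_cancel₀ _ hw.ne').ge⟩

lemma mul_ofReal_mem_rightSector (hw : w ∈ rightSector K) {r : ℝ} (hr : 0 < r) :
    w * r ∈ rightSector K := by
  constructor
  · rw [re_mul_ofReal]
    exact mul_pos hw.1 hr
  · rw [norm_mul, norm_real, Real.norm_of_nonneg hr.le, re_mul_ofReal, ← mul_assoc]
    gcongr
    exact hw.2

lemma norm_pos_of_mem_rightSector (hw : w ∈ rightSector K) : 0 < ‖w‖ :=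
  norm_pos_iff.2 (ne_zero_of_re_pos hw.1)

lemma nonneg_of_mem_rightSector (hw : w ∈ rightSector K) : 0 ≤ K :=
  nonneg_of_mul_nonneg_left ((norm_nonneg w).trans hw.2) hw.1

lemma add_ofReal_mul_I_re (w : ℂ) (y : ℝ) : (w + y * I).re = w.re := by simp

lemma norm_add_abs_le_of_mem_rightSector (hw : w ∈ rightSector K) (y : ℝ) :
    ‖w‖ + |y| ≤ (1 + 2 * K) * ‖w + y * I‖ := by
  have hre : w.re ≤ ‖w + y * I‖ := add_ofReal_mul_I_re w y ▸ re_le_norm _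
  have hnorm : ‖w‖ ≤ K * ‖w + y * I‖ :=
    hw.2.trans (mul_le_mul_of_nonneg_left hre (nonneg_of_mem_rightSector hw))
  have habs : |y| ≤ ‖w + y * I‖ + ‖w‖ := by
    simpa using norm_sub_le (w + y * I) w
  linarith

lemma norm_inv_add_mul_I_le (hw : w ∈ rightSector K) (y : ℝ) :
    ‖(w + y * I)⁻¹‖ ≤ (1 + 2 * K) / (‖w‖ + |y|) := by
  have hw0 := norm_pos_of_mem_rightSector hw
  have hre : 0 < (w + y * I).re := (add_ofReal_mul_I_re w y).symm ▸ hw.1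
  rw [norm_inv, inv_eq_one_div,
    div_le_div_iff₀ (norm_pos_iff.2 (ne_zero_of_re_pos hre)) (by positivity), one_mul]
  exact norm_add_abs_le_of_mem_rightSector hw y

lemma norm_inv_add_mul_I_sub_le (hw : w ∈ rightSector K) (x y : ℝ) :
    ‖(w + y * I)⁻¹ - (w + x * I)⁻¹‖ ≤
      (1 + 2 * K) ^ 2 * |y - x| / ((‖w‖ + |x|) * (‖w‖ + |y|)) := by
  have hK := nonneg_of_mem_rightSector hw
  have hne (z : ℝ) : w + z * I ≠ 0 :=
    ne_zero_of_re_pos ((add_ofReal_mul_I_re w z).symm ▸ hw.1)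
  have hsub : (w + x * I) - (w + y * I) = -((y - x : ℝ) * I) := by push_cast; ring
  rw [inv_sub_inv (hne y) (hne x), hsub, div_eq_mul_inv, mul_inv, norm_mul, norm_mul, norm_neg,
    norm_mul, norm_I, mul_one, norm_real, Real.norm_eq_abs]
  calc |y - x| * (‖(w + y * I)⁻¹‖ * ‖(w + x * I)⁻¹‖)
      ≤ |y - x| * ((1 + 2 * K) / (‖w‖ + |y|) * ((1 + 2 * K) / (‖w‖ + |x|))) := by
        gcongr <;> exact norm_inv_add_mul_I_le hw _
    _ = (1 + 2 * K) ^ 2 * |y - x| / ((‖w‖ + |x|) * (‖w‖ + |y|)) := by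
        field_simp

/-- The symmetrised Cauchy kernel `1 / (w + i y) + 1 / (w - i y) = 2 w / (w ^ 2 + y ^ 2)`. Its
values at `y = 2 π n` are the terms of the partial fraction expansion of `1 / (exp w - 1)`. -/
noncomputable def symmCauchyKernel (w : ℂ) (y : ℝ) : ℂ := (w + y * I)⁻¹ + (w - y * I)⁻¹

lemma sub_ofReal_mul_I (w : ℂ) (y : ℝ) : w - y * I = w + (-y : ℝ) * I := by push_cast; ring

lemma add_ofReal_mul_I_mem_slitPlane (hw : 0 < w.re) (y : ℝ) : w + y * I ∈ slitPlane :=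
  mem_slitPlane_iff.2 (.inl ((add_ofReal_mul_I_re w y).symm ▸ hw))

lemma sub_ofReal_mul_I_mem_slitPlane (hw : 0 < w.re) (y : ℝ) : w - y * I ∈ slitPlane :=
  sub_ofReal_mul_I w y ▸ add_ofReal_mul_I_mem_slitPlane hw (-y)

lemma symmCauchyKernel_eq_div (hw : 0 < w.re) (y : ℝ) :
    symmCauchyKernel w y = 2 * w / (w ^ 2 + (y : ℂ) ^ 2) := by
  have hprod : w ^ 2 + (y : ℂ) ^ 2 = (w + y * I) * (w - y * I) := by
    linear_combination (y : ℂ) ^ 2 * I_sq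
  have hadd := slitPlane_ne_zero (add_ofReal_mul_I_mem_slitPlane hw y)
  have hsub := slitPlane_ne_zero (sub_ofReal_mul_I_mem_slitPlane hw y)
  rw [symmCauchyKernel, hprod, inv_add_inv hadd hsub]
  ring

lemma symmCauchyKernel_zero (w : ℂ) : symmCauchyKernel w 0 = 2 / w := by
  simp only [symmCauchyKernel, ofReal_zero, zero_mul, add_zero, sub_zero]
  ring

lemma continuous_symmCauchyKernel (hw : 0 < w.re) : Continuous (symmCauchyKernel w) :=
  .add (.inv₀ (by fun_prop) fun y => slitPlane_ne_zero (add_ofReal_mul_I_mem_slitPlane hw y))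
    (.inv₀ (by fun_prop) fun y => slitPlane_ne_zero (sub_ofReal_mul_I_mem_slitPlane hw y))

lemma norm_symmCauchyKernel_le (hw : w ∈ rightSector K) (y : ℝ) :
    ‖symmCauchyKernel w y‖ ≤ 2 * (1 + 2 * K) / ‖w‖ := by
  have hK := nonneg_of_mem_rightSector hw
  have hw0 := norm_pos_of_mem_rightSector hw
  have hinv (z : ℝ) : ‖(w + z * I)⁻¹‖ ≤ (1 + 2 * K) / ‖w‖ :=
    (norm_inv_add_mul_I_le hw z).trans (by gcongr; exact le_add_of_nonneg_right (abs_nonneg z))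
  rw [symmCauchyKernel, sub_ofReal_mul_I]
  calc ‖(w + y * I)⁻¹ + (w + (-y : ℝ) * I)⁻¹‖
      ≤ (1 + 2 * K) / ‖w‖ + (1 + 2 * K) / ‖w‖ := norm_add_le_of_le (hinv y) (hinv (-y))
    _ = 2 * (1 + 2 * K) / ‖w‖ := by ring

lemma norm_symmCauchyKernel_sub_le (hw : w ∈ rightSector K) {x y : ℝ}
    (hx : 0 ≤ x) (hxy : x ≤ y) :
    ‖symmCauchyKernel w y - symmCauchyKernel w x‖ ≤
      2 * (1 + 2 * K) ^ 2 / (‖w‖ + x) - 2 * (1 + 2 * K) ^ 2 / (‖w‖ + y) := by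
  have hw0 := norm_pos_of_mem_rightSector hw
  have hy : 0 ≤ y := hx.trans hxy
  have hpos := norm_inv_add_mul_I_sub_le hw x y
  have hneg := norm_inv_add_mul_I_sub_le hw (-x) (-y)
  rw [abs_neg, abs_neg, neg_sub_neg, abs_sub_comm] at hneg
  rw [symmCauchyKernel, symmCauchyKernel, sub_ofReal_mul_I w x, sub_ofReal_mul_I w y,
    add_sub_add_comm]
  refine (norm_add_le_of_le hpos hneg).trans_eq ?_
  rw [abs_of_nonneg hx, abs_of_nonneg hy, abs_of_nonneg (sub_nonneg.2 hxy)]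
  field_simp
  ring

/-- The primitive of `symmCauchyKernel w` vanishing at `0`; it equals `2 * arctan (y / w)`. -/
noncomputable def symmCauchyPrimitive (w : ℂ) (y : ℝ) : ℂ := I * (log (w - y * I) - log (w + y * I))

lemma symmCauchyPrimitive_zero (w : ℂ) : symmCauchyPrimitive w 0 = 0 := by
  simp [symmCauchyPrimitive]

lemma hasDerivAt_symmCauchyPrimitive (hw : 0 < w.re) (y : ℝ) :
    HasDerivAt (symmCauchyPrimitive w) (symmCauchyKernel w y) y := by
  have hmul : HasDerivAt (fun y : ℝ => (y : ℂ) * I) I y := by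
    simpa using (hasDerivAt_id y).ofReal_comp.mul_const I
  have hsub := (hmul.const_sub w).clog_real (sub_ofReal_mul_I_mem_slitPlane hw y)
  have hadd := (hmul.const_add w).clog_real (add_ofReal_mul_I_mem_slitPlane hw y)
  refine ((hsub.sub hadd).const_mul I).congr_deriv ?_
  rw [symmCauchyKernel]
  linear_combination (-(w - y * I)⁻¹ - (w + y * I)⁻¹) * I_sq

lemma integral_symmCauchyKernel (hw : 0 < w.re) (Y : ℝ) :
    ∫ y in 0..Y, symmCauchyKernel w y = symmCauchyPrimitive w Y := by
  rw [intervalIntegral.integral_eq_sub_of_hasDerivAt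
    (fun y _ => hasDerivAt_symmCauchyPrimitive hw y)
    ((continuous_symmCauchyKernel hw).intervalIntegrable _ _), symmCauchyPrimitive_zero, sub_zero]

lemma tendsto_const_div_ofReal_atTop (w : ℂ) : Tendsto (fun y : ℝ => w / y) atTop (𝓝 0) := by
  simpa [div_eq_mul_inv] using (tendsto_inv_atTop_zero (𝕜 := ℝ)).ofReal.const_mul w

lemma symmCauchyPrimitive_eq_of_pos (hw : 0 < w.re) {y : ℝ} (hy : 0 < y) :
    symmCauchyPrimitive w y = I * (log (w / y - I) - log (w / y + I)) := by
  have hy0 : (y : ℂ) ≠ 0 := ofReal_ne_zero.2 hy.ne'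
  have hsub : w - y * I = y * (w / y - I) := by field_simp
  have hadd : w + y * I = y * (w / y + I) := by field_simp
  have hsub0 := slitPlane_ne_zero (sub_ofReal_mul_I_mem_slitPlane hw y)
  have hadd0 := slitPlane_ne_zero (add_ofReal_mul_I_mem_slitPlane hw y)
  rw [hsub] at hsub0
  rw [hadd] at hadd0
  rw [symmCauchyPrimitive, hsub, hadd, log_ofReal_mul hy (right_ne_zero_of_mul hsub0),
    log_ofReal_mul hy (right_ne_zero_of_mul hadd0)]
  ring

lemma tendsto_symmCauchyPrimitive (hw : 0 < w.re) :
    Tendsto (symmCauchyPrimitive w) atTop (𝓝 π) := by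
  have hdiv := tendsto_const_div_ofReal_atTop w
  have hsub : Tendsto (fun y : ℝ => log (w / y - I)) atTop (𝓝 (log (-I))) :=
    Tendsto.clog (by simpa using hdiv.sub_const I) (by simp [mem_slitPlane_iff])
  have hadd : Tendsto (fun y : ℝ => log (w / y + I)) atTop (𝓝 (log I)) :=
    Tendsto.clog (by simpa using hdiv.add_const I) (by simp [mem_slitPlane_iff])
  have hlim : I * (log (-I) - log I) = π := by
    rw [log_neg_I, log_I]
    linear_combination -(π : ℂ) * I_sq
  rw [← hlim]
  exact ((hsub.sub hadd).const_mul I).congr'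
    ((eventually_gt_atTop 0).mono fun y hy => (symmCauchyPrimitive_eq_of_pos hw hy).symm)

lemma norm_sum_sub_integral_le {E : Type*} [NormedAddCommGroup E] [NormedSpace ℝ E]
    [CompleteSpace E] {g : ℝ → E} {h : ℝ → ℝ} (hg : ∀ a b, IntervalIntegrable g volume a b)
    (hgh : ∀ x y, 0 ≤ x → x ≤ y → ‖g y - g x‖ ≤ h x - h y) (N : ℕ) :
    ‖∑ k ∈ Finset.range N, g (k + 1) - ∫ x in 0..N, g x‖ ≤ h 0 - h N := by
  induction N with
  | zero => simp
  | succ N ih =>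
    have hN : (0 : ℝ) ≤ N := N.cast_nonneg
    have hle : (N : ℝ) ≤ N + 1 := by linarith
    have hstep : ‖g (N + 1) - ∫ x in N..(N + 1 : ℝ), g x‖ ≤ h N - h (N + 1) := by
      have hconst : g (N + 1) - ∫ x in N..(N + 1 : ℝ), g x =
          ∫ x in N..(N + 1 : ℝ), (g (N + 1) - g x) := by
        rw [intervalIntegral.integral_sub intervalIntegrable_const (hg _ _)]
        simp
      rw [hconst]
      refine (intervalIntegral.norm_integral_le_of_norm_le_const
        (C := h N - h (N + 1)) fun x hx => ?_).trans_eq (by simp)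
      rw [uIoc_of_le hle] at hx
      have hmono := (norm_nonneg _).trans (hgh N x hN hx.1.le)
      linarith [hgh x (N + 1) (hN.trans hx.1.le) hx.2]
    rw [Finset.sum_range_succ, Nat.cast_succ,
      ← intervalIntegral.integral_add_adjacent_intervals (hg 0 N) (hg N (N + 1)), add_sub_add_comm]
    linarith [norm_add_le_of_le ih hstep]

/-! ### Partial fractions of `1 / (exp w - 1)` -/

/-- The partial sums of `1 / w + ∑ k, 2 w / (w ^ 2 + (2 π (k + 1)) ^ 2)` minus the integral that the
sum approximates. Subtracting the integral turns the limit into `1 / (exp w - 1)` and makes the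
convergence dominated by a multiple of `1 / ‖w‖`. -/
noncomputable def symmCauchyRemainder (N : ℕ) (w : ℂ) : ℂ :=
  symmCauchyKernel w 0 / 2 + ∑ k ∈ Finset.range N, symmCauchyKernel w (2 * π * (k + 1)) -
    (∫ y in 0..2 * π * N, symmCauchyKernel w y) / (2 * π)

lemma norm_symmCauchyRemainder_le (hw : w ∈ rightSector K) (N : ℕ) :
    ‖symmCauchyRemainder N w‖ ≤ (1 + 2 * (1 + 2 * K) ^ 2) / ‖w‖ := by
  have hw0 := norm_pos_of_mem_rightSector hw
  have hcont := (continuous_symmCauchyKernel hw.1).comp (continuous_const_mul (2 * π))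
  have hsum := norm_sum_sub_integral_le (g := fun x => symmCauchyKernel w (2 * π * x))
    (h := fun x => 2 * (1 + 2 * K) ^ 2 / (‖w‖ + 2 * π * x))
    (fun _ _ => hcont.intervalIntegrable _ _)
    (fun x y hx hxy => norm_symmCauchyKernel_sub_le hw (by positivity) (by gcongr)) N
  have hint : (∫ y in 0..2 * π * N, symmCauchyKernel w y) / (2 * π) =
      ∫ x in (0 : ℝ)..N, symmCauchyKernel w (2 * π * x) := by
    rw [intervalIntegral.integral_comp_mul_left _ Real.two_pi_pos.ne', mul_zero, real_smul,
      div_eq_inv_mul]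
    push_cast
    rfl
  have hzero : ‖symmCauchyKernel w 0 / 2‖ ≤ 1 / ‖w‖ := by
    rw [symmCauchyKernel_zero, div_right_comm, div_self two_ne_zero, norm_div, norm_one]
  rw [symmCauchyRemainder, hint, add_sub_assoc]
  calc _ ≤ 1 / ‖w‖ + (2 * (1 + 2 * K) ^ 2 / (‖w‖ + 2 * π * 0) -
          2 * (1 + 2 * K) ^ 2 / (‖w‖ + 2 * π * N)) := norm_add_le_of_le hzero hsum
    _ ≤ 1 / ‖w‖ + 2 * (1 + 2 * K) ^ 2 / ‖w‖ := by
        rw [mul_zero, add_zero]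
        gcongr
        exact sub_le_self _ (by positivity)
    _ = (1 + 2 * (1 + 2 * K) ^ 2) / ‖w‖ := by ring

lemma exp_ne_one_of_re_pos (hw : 0 < w.re) : exp w ≠ 1 := fun h =>
  hw.ne' (by simpa [norm_exp] using congrArg norm h)

lemma symmCauchyKernel_two_pi_mul (w : ℂ) (k : ℕ) :
    symmCauchyKernel w (2 * π * (k + 1)) = I / (2 * π) * cotTerm (I * w / (2 * π)) k := by
  have hpi : (π : ℂ) ≠ 0 := ofReal_ne_zero.2 Real.pi_ne_zero
  have hinv (m : ℂ) : (w + 2 * π * m * I)⁻¹ = I / (2 * π) * (1 / (I * w / (2 * π) - m)) := by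
    have : w + 2 * π * m * I = 2 * π / I * (I * w / (2 * π) - m) := by
      field_simp
      linear_combination 2 * π * m * I_sq
    rw [this, mul_inv, inv_div, one_div]
  rw [symmCauchyKernel, cotTerm, ← sub_neg_eq_add (I * w / (2 * π)), mul_add (I / (2 * π)),
    ← hinv, ← hinv]
  push_cast
  ring_nf

lemma tendsto_sum_symmCauchyKernel (hw : 0 < w.re) :
    Tendsto (fun N : ℕ => ∑ k ∈ Finset.range N, symmCauchyKernel w (2 * π * (k + 1))) atTop
      (𝓝 (1 / (exp w - 1) + 1 / 2 - 1 / w)) := by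
  have hpi : (π : ℂ) ≠ 0 := ofReal_ne_zero.2 Real.pi_ne_zero
  have hw0 := ne_zero_of_re_pos hw
  set z : ℂ := I * w / (2 * π) with hz
  have him : 0 < z.im := by
    have : z = I * w / (2 * π : ℝ) := by push_cast; rfl
    rw [this, div_ofReal_im, I_mul_im]
    positivity
  have hcot := (tendsto_logDeriv_euler_cot_sub
    (UpperHalfPlane.coe_mem_integerComplement ⟨z, him⟩)).const_mul (I / (2 * π))
  have hlim : I / (2 * π) * (π * cot (π * z) - 1 / z) = 1 / (exp w - 1) + 1 / 2 - 1 / w := by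
    have harg : 2 * π * I * z = -w := by
      rw [hz]
      field_simp
      exact I_sq
    have hexp : exp w - 1 ≠ 0 := sub_ne_zero.2 (exp_ne_one_of_re_pos hw)
    have : 1 - (exp w)⁻¹ ≠ 0 := sub_ne_zero.2 (inv_ne_one.2 (exp_ne_one_of_re_pos hw)).symm
    rw [cot_pi_eq_exp_ratio, harg, exp_neg, hz]
    field_simp
    ring
  rw [← hlim]
  simpa only [symmCauchyKernel_two_pi_mul, Finset.mul_sum] using hcot

lemma tendsto_symmCauchyRemainder (hw : 0 < w.re) :
    Tendsto (fun N => symmCauchyRemainder N w) atTop (𝓝 (1 / (exp w - 1))) := by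
  have hpi : (π : ℂ) ≠ 0 := ofReal_ne_zero.2 Real.pi_ne_zero
  have hint := (tendsto_symmCauchyPrimitive hw).comp
    (tendsto_natCast_atTop_atTop.const_mul_atTop Real.two_pi_pos)
  have hlim := ((tendsto_sum_symmCauchyKernel hw).const_add (symmCauchyKernel w 0 / 2)).sub
    (hint.div_const (2 * π))
  have hvalue : symmCauchyKernel w 0 / 2 + (1 / (exp w - 1) + 1 / 2 - 1 / w) - π / (2 * π) =
      1 / (exp w - 1) := by
    rw [symmCauchyKernel_zero]
    field_simp
    ring
  rw [← hvalue]
  simpa only [symmCauchyRemainder, integral_symmCauchyKernel hw, Function.comp_apply] using hlim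

/-! ### Integrals over `w = β cosh t` -/

lemma mul_cosh_re_pos (hβ : 0 < β.re) (t : ℝ) : 0 < (β * Real.cosh t).re := by
  rw [re_mul_ofReal]
  exact mul_pos hβ (Real.cosh_pos t)

lemma mul_cosh_mem_rightSector (hβ : β ∈ rightSector K) (t : ℝ) :
    β * Real.cosh t ∈ rightSector K :=
  mul_ofReal_mem_rightSector hβ (Real.cosh_pos t)

lemma div_norm_mul_cosh (C : ℝ) (β : ℂ) (t : ℝ) :
    C / ‖β * Real.cosh t‖ = C / ‖β‖ * (Real.cosh t)⁻¹ := by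
  rw [norm_mul, norm_real, Real.norm_of_nonneg (Real.cosh_pos t).le]
  ring

lemma integrableOn_inv_cosh : IntegrableOn (fun t => (Real.cosh t)⁻¹) (Ioi 0) := by
  refine ((exp_neg_integrableOn_Ioi 0 one_pos).const_mul 2).mono'
    (Real.continuous_cosh.inv₀ fun t => (Real.cosh_pos t).ne').aestronglyMeasurable
    (ae_of_all _ fun t => ?_)
  have hexp : Real.exp t ≤ 2 * Real.cosh t := by
    rw [Real.cosh_eq]
    linarith [Real.exp_pos (-t)]
  rw [norm_inv, Real.norm_of_nonneg (Real.cosh_pos t).le, neg_one_mul, Real.exp_neg,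
    ← div_eq_mul_inv, inv_eq_one_div, div_le_div_iff₀ (Real.cosh_pos t) (Real.exp_pos t), one_mul]
  exact hexp

lemma tendsto_sinh_atTop : Tendsto Real.sinh atTop atTop :=
  tendsto_atTop_mono' atTop
    ((eventually_ge_atTop 0).mono fun _ => Real.self_le_sinh_iff.2) tendsto_id

lemma continuous_symmCauchyKernel_mul_cosh (hβ : 0 < β.re) :
    Continuous fun p : ℝ × ℝ => symmCauchyKernel (β * Real.cosh p.2) p.1 :=
  .add
    (.inv₀ (by fun_prop) fun p =>
      slitPlane_ne_zero (add_ofReal_mul_I_mem_slitPlane (mul_cosh_re_pos hβ p.2) p.1))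
    (.inv₀ (by fun_prop) fun p =>
      slitPlane_ne_zero (sub_ofReal_mul_I_mem_slitPlane (mul_cosh_re_pos hβ p.2) p.1))

lemma norm_symmCauchyKernel_mul_cosh_le (hβ : β ∈ rightSector K) (t y : ℝ) :
    ‖symmCauchyKernel (β * Real.cosh t) y‖ ≤ 2 * (1 + 2 * K) / ‖β‖ * (Real.cosh t)⁻¹ :=
  (norm_symmCauchyKernel_le (mul_cosh_mem_rightSector hβ t) y).trans_eq (div_norm_mul_cosh _ β t)

lemma integrableOn_symmCauchyKernel_mul_cosh (hβ : 0 < β.re) (y : ℝ) :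
    IntegrableOn (fun t => symmCauchyKernel (β * Real.cosh t) y) (Ioi 0) := by
  obtain ⟨K, hK⟩ := exists_mem_rightSector hβ
  exact (integrableOn_inv_cosh.const_mul _).mono'
    ((continuous_symmCauchyKernel_mul_cosh hβ).comp (.prodMk_right y)).aestronglyMeasurable
    (ae_of_all _ fun t => norm_symmCauchyKernel_mul_cosh_le hK t y)

lemma symmCauchyKernel_mul_cosh (hβ : 0 < β.re) (y t : ℝ) :
    symmCauchyKernel (β * Real.cosh t) y =
      Real.cosh t / csqrt (β ^ 2 + (y : ℂ) ^ 2) *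
        symmCauchyKernel (csqrt (β ^ 2 + (y : ℂ) ^ 2) / β) (Real.sinh t) := by
  have hβ0 := ne_zero_of_re_pos hβ
  have hS0 := ne_zero_of_re_pos (csqrt_sq_add_sq_re_pos hβ y)
  rw [symmCauchyKernel_eq_div (mul_cosh_re_pos hβ t),
    symmCauchyKernel_eq_div (csqrt_sq_add_sq_div_re_pos hβ y)]
  have hsq := sq_csqrt (β ^ 2 + (y : ℂ) ^ 2)
  have hcosh : (Real.cosh t : ℂ) ^ 2 = (Real.sinh t : ℂ) ^ 2 + 1 := by
    exact_mod_cast Real.cosh_sq t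
  generalize csqrt (β ^ 2 + (y : ℂ) ^ 2) = S at *
  have hden : (S / β) ^ 2 + (Real.sinh t : ℂ) ^ 2 =
      ((β * Real.cosh t) ^ 2 + (y : ℂ) ^ 2) / β ^ 2 := by
    field_simp
    linear_combination hsq - β ^ 2 * hcosh
  rw [hden]
  field_simp

-- The substitution `u = sinh t` reduces the integral to that of the kernel in its second variable.
lemma integral_symmCauchyKernel_mul_cosh (hβ : 0 < β.re) (y : ℝ) :
    ∫ t in Ioi (0 : ℝ), symmCauchyKernel (β * Real.cosh t) y =
      π / csqrt (β ^ 2 + (y : ℂ) ^ 2) := by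
  set S := csqrt (β ^ 2 + (y : ℂ) ^ 2)
  have hre : 0 < (S / β).re := csqrt_sq_add_sq_div_re_pos hβ y
  have hderiv (t : ℝ) : HasDerivAt (fun t => symmCauchyPrimitive (S / β) (Real.sinh t) / S)
      (symmCauchyKernel (β * Real.cosh t) y) t := by
    refine (((hasDerivAt_symmCauchyPrimitive hre (Real.sinh t)).scomp t
      (Real.hasDerivAt_sinh t)).div_const S).congr_deriv ?_
    rw [symmCauchyKernel_mul_cosh hβ, real_smul]
    ring
  have hlim := ((tendsto_symmCauchyPrimitive hre).comp tendsto_sinh_atTop).div_const S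
  rw [integral_Ioi_of_hasDerivAt_of_tendsto' (fun t _ => hderiv t)
    (integrableOn_symmCauchyKernel_mul_cosh hβ y) hlim, Real.sinh_zero, symmCauchyPrimitive_zero,
    zero_div, sub_zero]

lemma integrable_symmCauchyKernel_mul_cosh_prod (hβ : 0 < β.re) (a b : ℝ) :
    Integrable (Function.uncurry fun y t => symmCauchyKernel (β * Real.cosh t) y)
      ((volume.restrict (uIoc a b)).prod (volume.restrict (Ioi 0))) := by
  obtain ⟨K, hK⟩ := exists_mem_rightSector hβ
  rw [uIoc]
  exact ((integrableOn_inv_cosh.const_mul _).comp_snd _).mono'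
    (continuous_symmCauchyKernel_mul_cosh hβ).aestronglyMeasurable
    (ae_of_all _ fun p => norm_symmCauchyKernel_mul_cosh_le hK p.2 p.1)

lemma integrableOn_intervalIntegral_symmCauchyKernel_mul_cosh (hβ : 0 < β.re) (a b : ℝ) :
    IntegrableOn (fun t => ∫ y in a..b, symmCauchyKernel (β * Real.cosh t) y) (Ioi 0) := by
  simp only [intervalIntegral.intervalIntegral_eq_integral_uIoc]
  exact (integrable_symmCauchyKernel_mul_cosh_prod hβ a b).integral_prod_right.smul _

lemma hasDerivAt_csqrt_sq_add_sq (hw : 0 < w.re) (y : ℝ) :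
    HasDerivAt (fun y : ℝ => csqrt (w ^ 2 + (y : ℂ) ^ 2)) (y / csqrt (w ^ 2 + (y : ℂ) ^ 2)) y := by
  have hpow : HasDerivAt (fun z : ℂ => w ^ 2 + z ^ 2) (2 * y) y := by
    simpa using (hasDerivAt_pow 2 (y : ℂ)).const_add (w ^ 2)
  have hcomp := (hasDerivAt_csqrt (sq_add_sq_mem_slitPlane hw y)).comp (y : ℂ) hpow
  refine hcomp.comp_ofReal.congr_deriv ?_
  field_simp

lemma continuous_csqrt_sq_add_sq (hw : 0 < w.re) :
    Continuous fun y : ℝ => csqrt (w ^ 2 + (y : ℂ) ^ 2) :=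
  continuous_iff_continuousAt.2 fun y => (hasDerivAt_csqrt_sq_add_sq hw y).continuousAt

lemma add_csqrt_sq_add_sq_re_pos (hw : 0 < w.re) {y : ℝ} (hy : 0 ≤ y) :
    0 < (y + csqrt (w ^ 2 + (y : ℂ) ^ 2)).re := by
  rw [add_re, ofReal_re]
  exact add_pos_of_nonneg_of_pos hy (csqrt_sq_add_sq_re_pos hw y)

lemma integral_one_div_csqrt (hw : 0 < w.re) {Y : ℝ} (hY : 0 ≤ Y) :
    ∫ y in 0..Y, 1 / csqrt (w ^ 2 + (y : ℂ) ^ 2) =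
      log (Y + csqrt (w ^ 2 + (Y : ℂ) ^ 2)) - log w := by
  have hS0 (y : ℝ) := ne_zero_of_re_pos (csqrt_sq_add_sq_re_pos hw y)
  have hderiv (y : ℝ) (hy : y ∈ uIcc 0 Y) :
      HasDerivAt (fun y : ℝ => log (y + csqrt (w ^ 2 + (y : ℂ) ^ 2)))
        (1 / csqrt (w ^ 2 + (y : ℂ) ^ 2)) y := by
    rw [uIcc_of_le hY] at hy
    have hre := add_csqrt_sq_add_sq_re_pos hw hy.1
    refine (((hasDerivAt_id y).ofReal_comp.add (hasDerivAt_csqrt_sq_add_sq hw y)).clog_real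
      (mem_slitPlane_iff.2 (.inl hre))).congr_deriv ?_
    have hsum0 := ne_zero_of_re_pos hre
    have := hS0 y
    simp only [Pi.add_apply, id, ofReal_one]
    field_simp
    ring
  rw [intervalIntegral.integral_eq_sub_of_hasDerivAt hderiv
    ((continuous_const.div (continuous_csqrt_sq_add_sq hw) hS0).intervalIntegrable _ _)]
  simp [csqrt_sq hw]

lemma integrableOn_sum_symmCauchyKernel_mul_cosh (hβ : 0 < β.re) (N : ℕ) :
    IntegrableOn (fun t => symmCauchyKernel (β * Real.cosh t) 0 / 2 +
      ∑ k ∈ Finset.range N, symmCauchyKernel (β * Real.cosh t) (2 * π * (k + 1))) (Ioi 0) :=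
  ((integrableOn_symmCauchyKernel_mul_cosh hβ 0).div_const 2).add
    (integrable_finsetSum _ fun _ _ => integrableOn_symmCauchyKernel_mul_cosh hβ _)

lemma integral_sum_symmCauchyKernel_mul_cosh (hβ : 0 < β.re) (N : ℕ) :
    ∫ t in Ioi (0 : ℝ), (symmCauchyKernel (β * Real.cosh t) 0 / 2 +
        ∑ k ∈ Finset.range N, symmCauchyKernel (β * Real.cosh t) (2 * π * (k + 1))) =
      π / β / 2 +
        ∑ k ∈ Finset.range N, π / csqrt (β ^ 2 + ((2 * π * (k + 1) : ℝ) : ℂ) ^ 2) := by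
  rw [integral_add ((integrableOn_symmCauchyKernel_mul_cosh hβ 0).div_const 2)
      (integrable_finsetSum _ fun _ _ => integrableOn_symmCauchyKernel_mul_cosh hβ _),
    integral_div, integral_finsetSum _ fun _ _ => integrableOn_symmCauchyKernel_mul_cosh hβ _]
  simp only [integral_symmCauchyKernel_mul_cosh hβ, ofReal_zero, zero_pow two_ne_zero, add_zero,
    csqrt_sq hβ]

lemma integral_intervalIntegral_symmCauchyKernel_mul_cosh (hβ : 0 < β.re) {Y : ℝ}
    (hY : 0 ≤ Y) :
    ∫ t in Ioi (0 : ℝ), ∫ y in 0..Y, symmCauchyKernel (β * Real.cosh t) y =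
      π * (log (Y + csqrt (β ^ 2 + (Y : ℂ) ^ 2)) - log β) := by
  rw [← intervalIntegral_integral_swap (integrable_symmCauchyKernel_mul_cosh_prod hβ 0 Y),
    ← integral_one_div_csqrt hβ hY, ← intervalIntegral.integral_const_mul]
  simp only [integral_symmCauchyKernel_mul_cosh hβ, mul_one_div]

lemma integral_symmCauchyRemainder (hβ : 0 < β.re) (N : ℕ) :
    ∫ t in Ioi (0 : ℝ), symmCauchyRemainder N (β * Real.cosh t) =
      π / β / 2 +
        ∑ k ∈ Finset.range N, π / csqrt (β ^ 2 + ((2 * π * (k + 1) : ℝ) : ℂ) ^ 2) -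
        (log ((2 * π * N : ℝ) + csqrt (β ^ 2 + ((2 * π * N : ℝ) : ℂ) ^ 2)) - log β) / 2 := by
  have hpi : (π : ℂ) ≠ 0 := ofReal_ne_zero.2 Real.pi_ne_zero
  simp only [symmCauchyRemainder]
  rw [integral_sub (integrableOn_sum_symmCauchyKernel_mul_cosh hβ N)
      ((integrableOn_intervalIntegral_symmCauchyKernel_mul_cosh hβ 0 _).div_const _),
    integral_div, integral_sum_symmCauchyKernel_mul_cosh hβ,
    integral_intervalIntegral_symmCauchyKernel_mul_cosh hβ (by positivity)]
  field_simp

lemma tendsto_integral_symmCauchyRemainder (hβ : 0 < β.re) :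
    Tendsto (fun N => ∫ t in Ioi (0 : ℝ), symmCauchyRemainder N (β * Real.cosh t)) atTop
      (𝓝 (∫ t in Ioi (0 : ℝ), 1 / (exp (β * Real.cosh t) - 1))) := by
  obtain ⟨K, hK⟩ := exists_mem_rightSector hβ
  refine tendsto_integral_of_dominated_convergence
    (fun t => (1 + 2 * (1 + 2 * K) ^ 2) / ‖β‖ * (Real.cosh t)⁻¹) (fun N => ?_)
    (integrableOn_inv_cosh.const_mul _) (fun N => ae_of_all _ fun t => ?_)
    (ae_of_all _ fun t => tendsto_symmCauchyRemainder (mul_cosh_re_pos hβ t))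
  · exact ((integrableOn_sum_symmCauchyKernel_mul_cosh hβ N).sub
      ((integrableOn_intervalIntegral_symmCauchyKernel_mul_cosh hβ 0 _).div_const _)).1
  · exact (norm_symmCauchyRemainder_le (mul_cosh_mem_rightSector hK t) N).trans_eq
      (div_norm_mul_cosh _ β t)

/-! ### The Bessel series -/

lemma hasSum_exp_neg_succ_mul (hw : 0 < w.re) :
    HasSum (fun n : ℕ => exp (-((n + 1) * w))) (1 / (exp w - 1)) := by
  have hlt : ‖exp (-w)‖ < 1 := by
    rwa [norm_exp, Real.exp_lt_one_iff, neg_re, neg_lt_zero]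
  have hvalue : exp (-w) * (1 - exp (-w))⁻¹ = 1 / (exp w - 1) := by
    rw [← div_eq_mul_inv, ← mul_div_mul_left _ _ (exp_ne_zero w), mul_sub, mul_one, ← exp_add,
      add_neg_cancel, exp_zero]
  rw [← hvalue]
  refine ((hasSum_geometric_of_norm_lt_one hlt).mul_left _).congr_fun fun n => ?_
  rw [← exp_nat_mul, ← exp_add]
  ring_nf

lemma hasSum_real_exp_neg_succ_mul {x : ℝ} (hx : 0 < x) :
    HasSum (fun n : ℕ => Real.exp (-((n + 1) * x))) (1 / (Real.exp x - 1)) := by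
  exact_mod_cast hasSum_exp_neg_succ_mul (w := x) (by rwa [ofReal_re])

lemma norm_exp_neg_succ_mul (n : ℕ) (w : ℂ) :
    ‖exp (-((n + 1) * w))‖ = Real.exp (-((n + 1) * w.re)) := by
  rw [norm_exp]
  simp

lemma integrableOn_one_div_exp_mul_cosh_sub_one {b : ℝ} (hb : 0 < b) :
    IntegrableOn (fun t => 1 / (Real.exp (b * Real.cosh t) - 1)) (Ioi 0) := by
  have hpos (t : ℝ) : 0 < b * Real.cosh t := mul_pos hb (Real.cosh_pos t)
  have hle (t : ℝ) : b * Real.cosh t ≤ Real.exp (b * Real.cosh t) - 1 :=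
    le_sub_iff_add_le.2 (Real.add_one_le_exp _)
  refine (integrableOn_inv_cosh.const_mul b⁻¹).mono'
    (continuous_const.div (by fun_prop)
      fun t => ((hpos t).trans_le (hle t)).ne').aestronglyMeasurable (ae_of_all _ fun t => ?_)
  rw [Real.norm_of_nonneg (one_div_nonneg.2 ((hpos t).trans_le (hle t)).le), ← mul_inv, ← one_div]
  exact one_div_le_one_div_of_le (hpos t) (hle t)

lemma tsum_besselK_zero (hβ : 0 < β.re) :
    ∑' n : ℕ, besselK 0 ((n + 1) * β) =
      ∫ t in Ioi (0 : ℝ), 1 / (exp (β * Real.cosh t) - 1) := by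
  have hbessel (n : ℕ) : besselK 0 ((n + 1) * β) =
      ∫ t in Ioi (0 : ℝ), exp (-((n + 1) * (β * Real.cosh t))) := by
    simp [besselK, mul_assoc]
  have hsum (t : ℝ) := hasSum_real_exp_neg_succ_mul (mul_pos hβ (Real.cosh_pos t))
  simp only [hbessel]
  refine (hasSum_integral_of_dominated_convergence
    (fun (n : ℕ) t => Real.exp (-((n + 1) * (β.re * Real.cosh t))))
    (fun n => Continuous.aestronglyMeasurable (by fun_prop))
    (fun n => ae_of_all _ fun t => ?_) (ae_of_all _ fun t => (hsum t).summable) ?_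
    (ae_of_all _ fun t => hasSum_exp_neg_succ_mul (mul_cosh_re_pos hβ t))).tsum_eq
  · rw [norm_exp_neg_succ_mul, re_mul_ofReal]
  · simp only [(hsum _).tsum_eq]
    exact integrableOn_one_div_exp_mul_cosh_sub_one hβ

/-! ### Asymptotics of the lattice sum -/

lemma abs_le_mul_norm_csqrt_sq_add_sq (hw : w ∈ rightSector K) (y : ℝ) :
    |y| ≤ (1 + 2 * K) * ‖csqrt (w ^ 2 + (y : ℂ) ^ 2)‖ := by
  have hK := nonneg_of_mem_rightSector hw
  have hle (z : ℝ) : |z| ≤ (1 + 2 * K) * ‖w + z * I‖ :=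
    (le_add_of_nonneg_left (norm_nonneg w)).trans (norm_add_abs_le_of_mem_rightSector hw z)
  have hprod : w ^ 2 + (y : ℂ) ^ 2 = (w + y * I) * (w + (-y : ℝ) * I) := by
    push_cast
    linear_combination (y : ℂ) ^ 2 * I_sq
  refine abs_le_of_sq_le_sq ?_ (by positivity)
  rw [mul_pow, ← norm_pow, sq_csqrt, hprod, norm_mul]
  calc y ^ 2 = |y| * |-y| := by rw [abs_neg, abs_mul_abs_self, pow_two]
    _ ≤ (1 + 2 * K) * ‖w + y * I‖ * ((1 + 2 * K) * ‖w + (-y : ℝ) * I‖) :=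
        mul_le_mul (hle y) (hle (-y)) (abs_nonneg _) (by positivity)
    _ = (1 + 2 * K) ^ 2 * (‖w + y * I‖ * ‖w + (-y : ℝ) * I‖) := by ring

lemma norm_one_div_csqrt_sub_one_div_le (hw : w ∈ rightSector K) {y : ℝ} (hy : 0 < y) :
    ‖1 / csqrt (w ^ 2 + (y : ℂ) ^ 2) - 1 / (y : ℂ)‖ ≤ (1 + 2 * K) * ‖w‖ ^ 2 / y ^ 3 := by
  have hK := nonneg_of_mem_rightSector hw
  have hre := csqrt_sq_add_sq_re_pos hw.1 y
  have hsq := sq_csqrt (w ^ 2 + (y : ℂ) ^ 2)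
  have hS := abs_le_mul_norm_csqrt_sq_add_sq hw y
  rw [abs_of_pos hy] at hS
  generalize csqrt (w ^ 2 + (y : ℂ) ^ 2) = S at *
  have hS0 := ne_zero_of_re_pos hre
  have : 0 < ‖S‖ := norm_pos_iff.2 hS0
  have hadd : y ≤ ‖S + y‖ :=
    (le_add_of_nonneg_left hre.le).trans (by simpa using re_le_norm (S + y))
  have hadd0 : S + y ≠ 0 := norm_pos_iff.1 (hy.trans_le hadd)
  have hy0 : (y : ℂ) ≠ 0 := ofReal_ne_zero.2 hy.ne'
  have hdiff : 1 / S - 1 / (y : ℂ) = -w ^ 2 / (S * y * (S + y)) := by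
    field_simp
    linear_combination -hsq
  rw [hdiff, norm_div, norm_neg, norm_pow, norm_mul, norm_mul, norm_real,
    Real.norm_of_nonneg hy.le, div_le_div_iff₀ (by positivity) (by positivity)]
  calc ‖w‖ ^ 2 * y ^ 3 = ‖w‖ ^ 2 * (y * y * y) := by ring
    _ ≤ ‖w‖ ^ 2 * ((1 + 2 * K) * ‖S‖ * y * ‖S + y‖) := by gcongr
    _ = (1 + 2 * K) * ‖w‖ ^ 2 * (‖S‖ * y * ‖S + y‖) := by ring

lemma summable_one_div_csqrt_sub_one_div (hw : 0 < w.re) {c : ℝ} (hc : 0 < c) :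
    Summable fun n : ℕ =>
      1 / csqrt (w ^ 2 + ((c * (n + 1) : ℝ) : ℂ) ^ 2) - 1 / ((c * (n + 1) : ℝ) : ℂ) := by
  obtain ⟨K, hK⟩ := exists_mem_rightSector hw
  have hpow : Summable fun n : ℕ => 1 / ((n : ℝ) + 1) ^ 3 := by
    exact_mod_cast (summable_nat_add_iff 1).2
      (Real.summable_one_div_nat_pow.2 (show 1 < 3 by simp))
  refine .of_norm_bounded (hpow.mul_left ((1 + 2 * K) * ‖w‖ ^ 2 / c ^ 3)) fun n => ?_
  refine (norm_one_div_csqrt_sub_one_div_le hK (by positivity)).trans_eq ?_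
  field_simp

lemma csqrt_sq_add_sq_eq_mul (hw : 0 < w.re) {y : ℝ} (hy : 0 < y) :
    csqrt (w ^ 2 + (y : ℂ) ^ 2) = y * csqrt ((w / y) ^ 2 + 1) := by
  have hy0 : (y : ℂ) ≠ 0 := ofReal_ne_zero.2 hy.ne'
  have hdiv : 0 < (w / y).re := by
    rw [div_ofReal_re]
    exact div_pos hw hy
  have hre : 0 < (y * csqrt ((w / y) ^ 2 + 1)).re := by
    rw [re_ofReal_mul]
    exact mul_pos hy (by simpa using csqrt_sq_add_sq_re_pos hdiv 1)
  rw [← csqrt_sq hre, mul_pow, sq_csqrt]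
  congr 1
  field_simp

lemma log_add_csqrt_sq_add_sq (hw : 0 < w.re) {y : ℝ} (hy : 0 < y) :
    log (y + csqrt (w ^ 2 + (y : ℂ) ^ 2)) = Real.log y + log (1 + csqrt ((w / y) ^ 2 + 1)) := by
  have hne := ne_zero_of_re_pos (add_csqrt_sq_add_sq_re_pos hw hy.le)
  have hprod : y + csqrt (w ^ 2 + (y : ℂ) ^ 2) = y * (1 + csqrt ((w / y) ^ 2 + 1)) := by
    rw [csqrt_sq_add_sq_eq_mul hw hy]
    ring
  rw [hprod] at hne ⊢
  exact log_ofReal_mul hy (right_ne_zero_of_mul hne)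

lemma tendsto_log_add_csqrt_sub_log (hw : 0 < w.re) :
    Tendsto (fun y : ℝ => log (y + csqrt (w ^ 2 + (y : ℂ) ^ 2)) - Real.log y) atTop
      (𝓝 (log 2)) := by
  have hone : csqrt 1 = 1 := by simpa using csqrt_sq (w := 1) (by simp)
  have hsqrt : Tendsto (fun y : ℝ => csqrt ((w / y) ^ 2 + 1)) atTop (𝓝 1) := by
    have hcont : Tendsto csqrt (𝓝 1) (𝓝 1) := by
      simpa [ContinuousAt, hone] using (hasDerivAt_csqrt one_mem_slitPlane).continuousAt
    refine hcont.comp ?_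
    simpa using ((tendsto_const_div_ofReal_atTop w).pow 2).add_const 1
  have hlog : Tendsto (fun y : ℝ => log (1 + csqrt ((w / y) ^ 2 + 1))) atTop (𝓝 (log 2)) := by
    refine Tendsto.clog ?_ (by simp)
    simpa [one_add_one_eq_two] using hsqrt.const_add 1
  refine hlog.congr' ((eventually_gt_atTop 0).mono fun y hy => ?_)
  exact (sub_eq_of_eq_add' (log_add_csqrt_sq_add_sq hw hy)).symm

lemma tendsto_sum_one_div_csqrt_sub_log (hw : 0 < w.re) {c : ℝ} (hc : 0 < c) :
    Tendsto (fun N : ℕ =>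
      c * ∑ k ∈ Finset.range N, 1 / csqrt (w ^ 2 + ((c * (k + 1) : ℝ) : ℂ) ^ 2) -
        log ((c * N : ℝ) + csqrt (w ^ 2 + ((c * N : ℝ) : ℂ) ^ 2))) atTop
      (𝓝 (c * ∑' n : ℕ,
          (1 / csqrt (w ^ 2 + ((c * (n + 1) : ℝ) : ℂ) ^ 2) - 1 / ((c * (n + 1) : ℝ) : ℂ)) +
        Real.eulerMascheroniConstant - Real.log c - log 2)) := by
  have hsum := (summable_one_div_csqrt_sub_one_div hw hc).hasSum.tendsto_sum_nat.const_mul (c : ℂ)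
  have hharmonic := Real.tendsto_harmonic_sub_log.ofReal
  have hlog := (tendsto_log_add_csqrt_sub_log hw).comp
    (tendsto_natCast_atTop_atTop.const_mul_atTop hc)
  refine (((hsum.add hharmonic).sub_const (Real.log c : ℂ)).sub hlog).congr'
    ((eventually_gt_atTop 0).mono fun N hN => ?_)
  have hc0 : (c : ℂ) ≠ 0 := ofReal_ne_zero.2 hc.ne'
  have hsplit : (harmonic N : ℂ) = c * ∑ k ∈ Finset.range N, 1 / ((c * (k + 1) : ℝ) : ℂ) := by
    rw [harmonic, Finset.mul_sum]
    push_cast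
    refine Finset.sum_congr rfl fun k _ => ?_
    field_simp
  rw [Function.comp_apply, Finset.sum_sub_distrib, ofReal_sub, ofReal_ratCast, hsplit,
    Real.log_mul hc.ne' (Nat.cast_ne_zero.2 hN.ne')]
  push_cast
  ring

lemma two_mul_tsum_besselK_zero (hβ : 0 < β.re) :
    2 * ∑' n : ℕ, besselK 0 ((n + 1) * β) =
      π / β + log β + ((2 * π : ℝ) * ∑' n : ℕ,
          (1 / csqrt (β ^ 2 + ((2 * π * (n + 1) : ℝ) : ℂ) ^ 2) -
            1 / ((2 * π * (n + 1) : ℝ) : ℂ)) +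
        Real.eulerMascheroniConstant - Real.log (2 * π) - log 2) := by
  have hlim := (tendsto_sum_one_div_csqrt_sub_log hβ Real.two_pi_pos).const_add (π / β + log β)
  rw [tsum_besselK_zero hβ]
  refine tendsto_nhds_unique ((tendsto_integral_symmCauchyRemainder hβ).const_mul 2)
    (hlim.congr fun N => ?_)
  rw [integral_symmCauchyRemainder hβ]
  simp only [← mul_one_div (π : ℂ) (csqrt _), ← Finset.mul_sum]
  push_cast
  ring

lemma log_div_ofReal {x : ℂ} (hx : x ≠ 0) {r : ℝ} (hr : 0 < r) :
    log (x / r) = log x - Real.log r := by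
  rw [div_eq_mul_inv, ← ofReal_inv, log_mul_ofReal _ (inv_pos.2 hr) _ hx, Real.log_inv, ofReal_neg]
  ring

end

theorem stmt17 (β : ℂ) (hβ : 0 < β.re) :
    2 * ∑' n : ℕ, besselK 0 (((n : ℂ) + 1) * β)
      = (π : ℂ) * (1 / β +
          2 * ∑' n : ℕ, (1 / csqrt (β^2 + 4 * (π : ℂ)^2 * ((n : ℂ) + 1)^2) -
            1 / (2 * ((n : ℂ) + 1) * (π : ℂ))))
        + (Real.eulerMascheroniConstant : ℂ) + Complex.log (β / 2) - Complex.log (2 * (π : ℂ)) := by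
  have hterm (n : ℕ) : 1 / csqrt (β ^ 2 + 4 * (π : ℂ) ^ 2 * ((n : ℂ) + 1) ^ 2) -
      1 / (2 * ((n : ℂ) + 1) * (π : ℂ)) =
      1 / csqrt (β ^ 2 + ((2 * π * (n + 1) : ℝ) : ℂ) ^ 2) - 1 / ((2 * π * (n + 1) : ℝ) : ℂ) := by
    push_cast
    ring_nf
  have hlog_two_pi : Complex.log (2 * π) = Real.log (2 * π) := by
    rw [Complex.ofReal_log Real.two_pi_pos.le]
    push_cast
    rfl
  have hlog_div : Complex.log (β / 2) = Complex.log β - Complex.log 2 := by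
    simpa using log_div_ofReal (Complex.ne_zero_of_re_pos hβ) two_pos
  rw [two_mul_tsum_besselK_zero hβ, hlog_two_pi, hlog_div]
  simp only [hterm]
  push_cast
  ring
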